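/- Let σ ∈ ℝ and let ℓ : ℝ → ℂ be a C^∞ function such that ‖ℓ‖_{σ,m} := sup_{y∈ℝ} ⟨y⟩^{−(σ−m)} |ℓ^{(m)}(y)| < ∞ for every integer m ≥ 0. Let A_* > 0 and let A(x) = A_* + a(x) with a : 𝕋 → ℝ a C^∞ function satisfying ‖a‖_{C⁰} ≤ A_*/2 and ‖a‖₁ ≤ 1. Then the function h : 𝕋 × ℤ → ℂ, h(x,j) := ℓ(jA(x)), satisfies, for every s ≥ 0, |h|_{σ,s} ≤ C(s, A_*, ℓ)(1 + ‖a‖_s), with constants C(s, A_*, ℓ) > 0 nondecreasing in s. -/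

import Mathlib

/-!
On `[-A_*/2, A_*/2]` the rescaled functions `F_j(y) = ⟨j⟩^{-σ} ℓ(j(A_* + y))` have derivatives of
every order bounded uniformly in `j`, because `|j(A_* + y)|` is comparable to `|j|` there
(`rescaled_bound`). The theorem therefore reduces to a Moser estimate
`‖F ∘ a‖_s ≤ D (1 + ‖a‖_s)` for `‖a‖₁ ≤ 1`, with `D` depending only on `s` and on bounds for the
derivatives of `F` (`moser`).

For `s ≤ 1` this follows from `‖F ∘ a‖_s ≤ ‖F ∘ a‖₀ + ‖(F' ∘ a) a'‖₀` and Parseval's identity.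
For `s > 1` one starts from `‖F ∘ a‖_s ≤ ‖F ∘ a‖₀ + ‖(F' ∘ a) a'‖_{s-1}` and applies, with
`r = s - 1`, `u = F' ∘ a` and `v = a'`, the tame product estimate
`‖u v‖_r ≤ C (‖u‖_{r+3/4} ‖v‖₀ + ‖u‖_{3/4} ‖v‖_r)` (`SmoothPer.sobNorm_mul_le`). Here
`‖v‖₀ ≤ ‖a‖₁ ≤ 1` and `‖v‖_r ≤ ‖a‖_s`, so only the norm `‖F' ∘ a‖_{s-1/4}` remains; it is of the
same kind with a smaller exponent, and an induction in steps of `1/4` reaches every real `s`.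

The product estimate is proved on the Fourier side: the coefficients of `u v` are a convolution,
`⟨m + n⟩^r ≤ 2^r (⟨m⟩^r + ⟨n⟩^r)`, Young's inequality `ℓ¹ ∗ ℓ² ⊂ ℓ²` applies to each of the two
terms, and `∑ ⟨m⟩^r |û(m)| ≤ C ‖u‖_{r+3/4}` by Cauchy–Schwarz.
-/

open scoped Real BigOperators
open MeasureTheory

noncomputable section

def jb (j : ℤ) : ℝ := max 1 |(j : ℝ)|

def fc (u : ℝ → ℂ) (j : ℤ) : ℂ :=
  (1 / (2 * (π : ℂ))) * ∫ x in (0:ℝ)..(2 * π), u x * Complex.exp (-Complex.I * (j : ℂ) * (x : ℂ))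

def fcR (u : ℝ → ℝ) (j : ℤ) : ℂ := fc (fun x => (u x : ℂ)) j

def sobNorm (s : ℝ) (u : ℝ → ℂ) : ℝ :=
  Real.sqrt (∑' j : ℤ, jb j ^ (2 * s) * ‖fc u j‖ ^ 2)

def memHs (s : ℝ) (u : ℝ → ℂ) : Prop :=
  Summable (fun j : ℤ => jb j ^ (2 * s) * ‖fc u j‖ ^ 2)

def sobNormR (s : ℝ) (u : ℝ → ℝ) : ℝ := sobNorm s (fun x => (u x : ℂ))
def memHsR (s : ℝ) (u : ℝ → ℝ) : Prop := memHs s (fun x => (u x : ℂ))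

def pairNorm (s : ℝ) (a b : ℝ → ℝ) : ℝ := sobNormR s a + sobNormR s b

def seqNorm (s : ℝ) (c : ℤ → ℂ) : ℝ :=
  Real.sqrt (∑' j : ℤ, jb j ^ (2 * s) * ‖c j‖ ^ 2)

def memSeq (s : ℝ) (c : ℤ → ℂ) : Prop :=
  Summable (fun j : ℤ => jb j ^ (2 * s) * ‖c j‖ ^ 2)

def smoothPer (u : ℝ → ℝ) : Prop :=
  ContDiff ℝ (⊤ : ℕ∞) u ∧ Function.Periodic u (2 * π)

def J1 (θ : ℝ) : ℝ :=
  ((1 / (2 * (π : ℂ))) * ∫ φ in (0:ℝ)..(2 * π),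
    Complex.exp (Complex.I * (θ : ℂ) * (Real.sin φ : ℂ)) * Complex.exp (-Complex.I * (φ : ℂ))).re

/-! ### Fourier coefficients of smooth periodic functions -/

/-- Smooth `2π`-periodic complex functions on the line, the model for `C^∞(𝕋, ℂ)`. -/
def SmoothPer (u : ℝ → ℂ) : Prop :=
  ContDiff ℝ (⊤ : ℕ∞) u ∧ Function.Periodic u (2 * π)

theorem jb_one_le (j : ℤ) : 1 ≤ jb j := le_max_left _ _

theorem jb_pos (j : ℤ) : 0 < jb j := lt_of_lt_of_le one_pos (jb_one_le j)

theorem jb_of_ne_zero {j : ℤ} (hj : j ≠ 0) : jb j = |(j : ℝ)| := by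
  apply max_eq_right
  exact_mod_cast Int.one_le_abs hj

theorem jb_zero : jb 0 = 1 := by simp [jb]

theorem jb_add_le (m n : ℤ) : jb (m + n) ≤ jb m + jb n := by
  apply max_le
  · linarith [jb_one_le m, jb_pos n]
  · push_cast
    exact (abs_add_le _ _).trans (add_le_add (le_max_right _ _) (le_max_right _ _))

theorem jb_rpow_nonneg (r : ℝ) (j : ℤ) : 0 ≤ jb j ^ r := (Real.rpow_pos_of_pos (jb_pos j) r).le

theorem jb_add_rpow_le {r : ℝ} (hr : 0 ≤ r) (m n : ℤ) :
    jb (m + n) ^ r ≤ 2 ^ r * (jb m ^ r + jb n ^ r) := by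
  have hM : jb (m + n) ≤ 2 * max (jb m) (jb n) := by
    linarith [jb_add_le m n, le_max_left (jb m) (jb n), le_max_right (jb m) (jb n)]
  have h0 : 0 ≤ max (jb m) (jb n) := (jb_pos m).le.trans (le_max_left _ _)
  calc jb (m + n) ^ r ≤ (2 * max (jb m) (jb n)) ^ r :=
        Real.rpow_le_rpow (jb_pos _).le hM hr
    _ = 2 ^ r * max (jb m) (jb n) ^ r := Real.mul_rpow (by norm_num) h0
    _ ≤ _ := by
        gcongr
        rcases max_cases (jb m) (jb n) with ⟨h, _⟩ | ⟨h, _⟩ <;> rw [h]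
        · linarith [jb_rpow_nonneg r n]
        · linarith [jb_rpow_nonneg r m]

theorem summable_jb_rpow {b : ℝ} (hb : 1 < b) : Summable fun j : ℤ => jb j ^ (-b) := by
  refine (Real.summable_abs_int_rpow hb).of_norm_bounded_eventually ?_
  have : ∀ᶠ j : ℤ in Filter.cofinite, j ≠ 0 := by
    exact (Set.finite_singleton (0 : ℤ)).subset fun j hj => by simpa using hj
  filter_upwards [this] with j hj
  rw [jb_of_ne_zero hj, Real.norm_of_nonneg (Real.rpow_nonneg (abs_nonneg _) _)]

theorem fourier_neg_two_pi (j : ℤ) (x : ℝ) :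
    fourier (T := 2 * π) (-j) (x : AddCircle (2 * π)) = Complex.exp (-Complex.I * j * x) := by
  rw [fourier_coe_apply]
  congr 1
  have : (π : ℂ) ≠ 0 := by exact_mod_cast Real.pi_ne_zero
  push_cast
  field_simp

theorem norm_exp_neg (j : ℤ) (x : ℝ) : ‖Complex.exp (-Complex.I * j * x)‖ = 1 := by
  rw [Complex.norm_exp]
  simp

theorem fc_eq_fourierCoeffOn (u : ℝ → ℂ) (j : ℤ) :
    fc u j = fourierCoeffOn Real.two_pi_pos u j := by
  rw [fourierCoeffOn_eq_integral, fc]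
  rw [Complex.real_smul]
  push_cast
  rw [sub_zero]
  congr 1
  apply intervalIntegral.integral_congr
  intro x _
  simp only [smul_eq_mul]
  have := fourier_neg_two_pi j x
  rw [mul_comm, ← this]
  rw [fourier_coe_apply, fourier_coe_apply]
  simp

theorem fc_const_mul (c : ℂ) (u : ℝ → ℂ) (j : ℤ) : fc (fun x => c * u x) j = c * fc u j := by
  rw [fc_eq_fourierCoeffOn, fc_eq_fourierCoeffOn, fourierCoeffOn.const_mul]

/-- Parseval's identity. -/
theorem hasSum_sq_fc {u : ℝ → ℂ} (hu : Continuous u) :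
    HasSum (fun j : ℤ => ‖fc u j‖ ^ 2) ((2 * π)⁻¹ * ∫ x in (0:ℝ)..(2 * π), ‖u x‖ ^ 2) := by
  have hL : MemLp u 2 (volume.restrict (Set.Ioc 0 (2 * π))) := by
    obtain ⟨M, hM⟩ := (isCompact_Icc (a := (0:ℝ)) (b := 2 * π)).exists_bound_of_continuousOn
      hu.continuousOn
    refine MemLp.of_bound hu.aestronglyMeasurable M ?_
    exact (ae_restrict_iff' measurableSet_Ioc).2
      (Filter.Eventually.of_forall fun x hx => hM x (Set.Ioc_subset_Icc_self hx))
  have := hasSum_sq_fourierCoeffOn Real.two_pi_pos hL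
  simpa [fc_eq_fourierCoeffOn] using this

theorem fc_norm_le {u : ℝ → ℂ} {M : ℝ} (hM : ∀ x, ‖u x‖ ≤ M) (j : ℤ) :
    ‖fc u j‖ ≤ M := by
  have h := intervalIntegral.norm_integral_le_of_norm_le_const (a := 0) (b := 2 * π) (C := M)
    (f := fun x : ℝ => u x * Complex.exp (-Complex.I * (j : ℂ) * (x : ℂ)))
    (fun x _ => by rw [norm_mul, norm_exp_neg, mul_one]; exact hM x)
  rw [fc, norm_mul]
  rw [sub_zero, abs_of_pos Real.two_pi_pos] at h
  have hn : ‖(1 / (2 * (π : ℂ)))‖ = (2 * π)⁻¹ := by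
    simp [abs_of_pos Real.pi_pos]
  rw [hn]
  calc (2 * π)⁻¹ * _ ≤ (2 * π)⁻¹ * (M * (2 * π)) := by
        gcongr
    _ = M := by field_simp

namespace SmoothPer

variable {u v : ℝ → ℂ}

theorem continuous (hu : SmoothPer u) : Continuous u := hu.1.continuous

theorem deriv (hu : SmoothPer u) : SmoothPer (_root_.deriv u) := by
  refine ⟨?_, ?_⟩
  · have := contDiff_infty_iff_deriv.1 hu.1
    exact this.2
  · intro x
    have : u = fun y => u (y + 2 * π) := funext fun y => (hu.2 y).symm
    conv_rhs => rw [this]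
    rw [deriv_comp_add_const]

theorem mul (hu : SmoothPer u) (hv : SmoothPer v) : SmoothPer (fun x => u x * v x) :=
  ⟨hu.1.mul hv.1, hu.2.mul hv.2⟩

theorem exists_bound (hu : SmoothPer u) : ∃ M, ∀ x, ‖u x‖ ≤ M := by
  obtain ⟨M, hM⟩ := (isCompact_Icc (a := (0:ℝ)) (b := 2 * π)).exists_bound_of_continuousOn
    hu.continuous.continuousOn
  refine ⟨M, fun x => ?_⟩
  obtain ⟨y, hy, hxy⟩ := hu.2.exists_mem_Ico₀ Real.two_pi_pos x
  rw [hxy]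
  exact hM y (Set.Ico_subset_Icc_self hy)

theorem fc_deriv (hu : SmoothPer u) (j : ℤ) :
    fc (_root_.deriv u) j = Complex.I * j * fc u j := by
  have hd : ∀ x, HasDerivAt u (_root_.deriv u x) x := fun x =>
    ((hu.1.differentiable (by simp)) x).hasDerivAt
  have he : ∀ x : ℝ, HasDerivAt (fun x : ℝ => Complex.exp (-Complex.I * (j : ℂ) * (x : ℂ)))
      (Complex.exp (-Complex.I * (j : ℂ) * (x : ℂ)) * (-Complex.I * j)) x := by
    intro x
    have h1 : HasDerivAt (fun x : ℝ => -Complex.I * (j : ℂ) * (x : ℂ)) (-Complex.I * j) x := by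
      simpa using (Complex.ofRealCLM.hasDerivAt (x := x)).const_mul (-Complex.I * (j : ℂ))
    exact h1.cexp
  have hp := intervalIntegral.integral_mul_deriv_eq_deriv_mul (a := 0) (b := 2 * π)
    (fun x _ => hd x) (fun x _ => he x)
    (hu.deriv.continuous.intervalIntegrable _ _)
    ((by fun_prop : Continuous fun x : ℝ =>
      Complex.exp (-Complex.I * (j : ℂ) * (x : ℂ)) * (-Complex.I * j)).intervalIntegrable _ _)
  have hu0 : u (2 * π) = u 0 := by simpa using hu.2 0
  have hexp : Complex.exp (-Complex.I * (j : ℂ) * ((2 * π : ℝ) : ℂ)) = 1 := by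
    rw [Complex.exp_eq_one_iff]
    exact ⟨-j, by push_cast; ring⟩
  rw [hu0, hexp] at hp
  simp only [Complex.ofReal_zero, mul_zero, Complex.exp_zero, sub_self, zero_sub] at hp
  have hq : (∫ x in (0:ℝ)..(2 * π), u x * (Complex.exp (-Complex.I * (j : ℂ) * (x : ℂ)) *
      (-Complex.I * j))) = (∫ x in (0:ℝ)..(2 * π), u x * Complex.exp (-Complex.I * (j : ℂ) *
      (x : ℂ))) * (-Complex.I * j) := by
    rw [← intervalIntegral.integral_mul_const]
    simp only [mul_assoc]
  rw [hq] at hp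
  unfold fc
  linear_combination (1 / (2 * (π : ℂ))) * hp

theorem norm_fc_deriv (hu : SmoothPer u) (j : ℤ) :
    ‖fc (_root_.deriv u) j‖ = |(j : ℝ)| * ‖fc u j‖ := by
  rw [hu.fc_deriv]
  simp

/-- Fourier coefficients of a smooth function decay faster than any power. -/
theorem exists_decay (n : ℕ) : ∀ {u : ℝ → ℂ}, SmoothPer u →
    ∃ M, ∀ j, jb j ^ n * ‖fc u j‖ ≤ M := by
  induction n with
  | zero =>
    intro u hu
    obtain ⟨M, hM⟩ := hu.exists_bound
    exact ⟨M, fun j => by simpa using fc_norm_le hM j⟩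
  | succ n ih =>
    intro u hu
    obtain ⟨M, hM⟩ := ih hu.deriv
    obtain ⟨M', hM'⟩ := hu.exists_bound
    refine ⟨max M M', fun j => ?_⟩
    rcases eq_or_ne j 0 with rfl | hj
    · simpa [jb_zero] using Or.inr (fc_norm_le hM' 0)
    · refine le_trans (le_of_eq ?_) ((hM j).trans (le_max_left _ _))
      rw [hu.norm_fc_deriv, ← jb_of_ne_zero hj, pow_succ, mul_assoc]

/-- Smooth functions have summable Fourier coefficients against every weight `⟨j⟩^r`. -/
theorem summable_fc (hu : SmoothPer u) (r : ℝ) : Summable fun j => jb j ^ r * ‖fc u j‖ := by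
  obtain ⟨n, hn⟩ := exists_nat_ge (r + 2)
  obtain ⟨M, hM⟩ := exists_decay n hu
  refine ((summable_jb_rpow (b := 2) (by norm_num)).mul_left M).of_nonneg_of_le
    (fun j => mul_nonneg (jb_rpow_nonneg _ _) (norm_nonneg _)) fun j => ?_
  have h1 : jb j ^ r ≤ jb j ^ (-2 : ℝ) * jb j ^ n := by
    rw [← Real.rpow_natCast, ← Real.rpow_add (jb_pos j)]
    exact Real.rpow_le_rpow_of_exponent_le (jb_one_le j) (by linarith)
  calc jb j ^ r * ‖fc u j‖ ≤ jb j ^ (-2 : ℝ) * jb j ^ n * ‖fc u j‖ := by gcongr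
    _ = jb j ^ (-2 : ℝ) * (jb j ^ n * ‖fc u j‖) := by ring
    _ ≤ jb j ^ (-2 : ℝ) * M := mul_le_mul_of_nonneg_left (hM j) (jb_rpow_nonneg _ _)
    _ = _ := mul_comm _ _

/-- A smooth function belongs to every Sobolev space. -/
theorem memHs (hu : SmoothPer u) (s : ℝ) : memHs s u := by
  obtain ⟨M, hM⟩ := hu.exists_bound
  refine ((hu.summable_fc (2 * s)).mul_left M).of_nonneg_of_le
    (fun j => mul_nonneg (jb_rpow_nonneg _ _) (sq_nonneg _)) fun j => ?_
  have h1 := fc_norm_le hM j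
  calc jb j ^ (2 * s) * ‖fc u j‖ ^ 2 = ‖fc u j‖ * (jb j ^ (2 * s) * ‖fc u j‖) := by ring
    _ ≤ _ := mul_le_mul_of_nonneg_right h1 (mul_nonneg (jb_rpow_nonneg _ _) (norm_nonneg _))

/-- Pointwise convergence of the Fourier series. -/
theorem hasSum_fourier (hu : SmoothPer u) (x : ℝ) :
    HasSum (fun m : ℤ => fc u m * Complex.exp (Complex.I * m * x)) (u x) := by
  have : Fact (0 < 2 * π) := ⟨Real.two_pi_pos⟩
  let f : C(AddCircle (2 * π), ℂ) := ⟨hu.2.lift, continuous_coinduced_dom.2 hu.continuous⟩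
  have hf : fourierCoeff f = fc u := by
    ext j
    rw [fourierCoeff_eq_intervalIntegral _ _ 0, fc, zero_add, Complex.real_smul]
    push_cast
    congr 1
    apply intervalIntegral.integral_congr
    intro y _
    simp only [smul_eq_mul]
    rw [fourier_neg_two_pi, mul_comm]
    rfl
  have hs : Summable (fourierCoeff f) := by
    rw [hf]
    refine Summable.of_norm ?_
    simpa using hu.summable_fc 0
  have := has_pointwise_sum_fourier_series_of_summable hs (x : AddCircle (2 * π))
  rw [hf] at this
  convert! this using 2 with m
  have h2 := fourier_neg_two_pi (-m) x
  rw [neg_neg] at h2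
  rw [h2, smul_eq_mul]
  push_cast
  ring_nf

/-- The Fourier coefficients of a product are the convolution of the Fourier coefficients. -/
theorem hasSum_fc_mul (hu : SmoothPer u) (hv : SmoothPer v) (k : ℤ) :
    HasSum (fun m : ℤ => fc u m * fc v (k - m)) (fc (fun x => u x * v x) k) := by
  obtain ⟨M, hM⟩ := hv.exists_bound
  have hvc := hv.continuous
  have key := intervalIntegral.hasSum_integral_of_dominated_convergence (μ := volume)
    (a := 0) (b := 2 * π)
    (F := fun (m : ℤ) (x : ℝ) => fc u m * (v x * Complex.exp (-Complex.I * ((k - m : ℤ) : ℂ) * x)))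
    (f := fun x => u x * v x * Complex.exp (-Complex.I * (k : ℂ) * x))
    (fun m _ => ‖fc u m‖ * M)
    (fun m => (by fun_prop : Continuous fun x : ℝ => fc u m *
      (v x * Complex.exp (-Complex.I * ((k - m : ℤ) : ℂ) * x))).aestronglyMeasurable)
    (fun m => Filter.Eventually.of_forall fun x _ => by
      rw [norm_mul, norm_mul, norm_exp_neg, mul_one]
      gcongr
      exact hM x)
    (Filter.Eventually.of_forall fun x _ => by
      have := (hu.summable_fc 0).mul_right M
      simpa using this)
    (by simp)
    (Filter.Eventually.of_forall fun x _ => by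
      have := (hu.hasSum_fourier x).mul_right (v x * Complex.exp (-Complex.I * (k : ℂ) * x))
      convert! this using 1
      · ext m
        have hexp : Complex.exp (-Complex.I * ((k - m : ℤ) : ℂ) * x) =
            Complex.exp (Complex.I * m * x) * Complex.exp (-Complex.I * (k : ℂ) * x) := by
          rw [← Complex.exp_add]
          congr 1
          push_cast
          ring
        rw [hexp]
        ring
      · ring)
  have key2 := key.mul_left (1 / (2 * (π : ℂ)))
  convert! key2 using 2 with m
  rw [intervalIntegral.integral_const_mul, fc, fc]
  ring

end SmoothPer

/-! ### Sobolev norms and the tame product estimate -/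

/-- Cauchy–Schwarz for series with a nonnegative weight `f`. -/
theorem tsum_mul_sq_le {ι : Type*} {f h : ι → ℝ} (hf : ∀ i, 0 ≤ f i) (hs : Summable f)
    (hq : Summable fun i => f i * h i ^ 2) :
    Summable (fun i => f i * h i) ∧
      (∑' i, f i * h i) ^ 2 ≤ (∑' i, f i) * ∑' i, f i * h i ^ 2 := by
  have h1 : Summable (fun i => f i * h i) := by
    refine (hs.add hq).of_norm_bounded fun i => ?_
    rw [norm_mul, Real.norm_of_nonneg (hf i), Real.norm_eq_abs]
    have : |h i| ≤ 1 + h i ^ 2 := by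
      rw [← sq_abs]
      nlinarith [sq_nonneg (|h i| - 1), abs_nonneg (h i)]
    nlinarith [mul_le_mul_of_nonneg_left this (hf i)]
  refine ⟨h1, ?_⟩
  -- the quadratic polynomial `t ↦ ∑ f (t + h)²` is nonnegative, hence its discriminant is not
  -- positive
  have hd : discrim (∑' i, f i) (2 * ∑' i, f i * h i) (∑' i, f i * h i ^ 2) ≤ 0 := by
    apply discrim_le_zero
    intro t
    have e : (∑' i, f i) * (t * t) + 2 * (∑' i, f i * h i) * t + ∑' i, f i * h i ^ 2
        = ∑' i, f i * (t + h i) ^ 2 := by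
      have := ((hs.hasSum.mul_right (t * t)).add ((h1.hasSum.mul_left 2).mul_right t)).add hq.hasSum
      rw [← this.tsum_eq]
      congr 1
      ext i
      ring
    rw [e]
    exact tsum_nonneg fun i => mul_nonneg (hf i) (sq_nonneg _)
  unfold discrim at hd
  nlinarith

/-- Young's inequality `‖f ∗ g‖_{ℓ²} ≤ ‖f‖_{ℓ¹} ‖g‖_{ℓ²}`, with the summability it presupposes. -/
theorem young_sq {f g : ℤ → ℝ} (hf : ∀ i, 0 ≤ f i) (hs : Summable f)
    (hq : Summable fun i => g i ^ 2) :
    (∀ k, Summable fun m => f m * g (k - m)) ∧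
    Summable (fun k => (∑' m, f m * g (k - m)) ^ 2) ∧
      ∑' k, (∑' m, f m * g (k - m)) ^ 2 ≤ (∑' m, f m) ^ 2 * ∑' m, g m ^ 2 := by
  have hprod : Summable fun p : ℤ × ℤ => f p.1 * g p.2 ^ 2 :=
    hs.mul_of_nonneg hq hf fun _ => sq_nonneg _
  let e : ℤ × ℤ ≃ ℤ × ℤ :=
    { toFun := fun p => (p.2, p.1 - p.2)
      invFun := fun p => (p.1 + p.2, p.1)
      left_inv := fun p => by simp
      right_inv := fun p => by simp }
  have hprod' : Summable fun p : ℤ × ℤ => f p.2 * g (p.1 - p.2) ^ 2 :=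
    (e.summable_iff (f := fun p : ℤ × ℤ => f p.1 * g p.2 ^ 2)).2 hprod
  have hrow : ∀ k, Summable fun m => f m * g (k - m) ^ 2 := fun k => hprod'.prod_factor k
  have hsum : Summable fun k => ∑' m, f m * g (k - m) ^ 2 := hprod'.prod
  have htot : ∑' k, ∑' m, f m * g (k - m) ^ 2 = (∑' m, f m) * ∑' m, g m ^ 2 := by
    rw [← hprod'.tsum_prod, hs.tsum_mul_tsum hq hprod]
    exact e.tsum_eq (fun p : ℤ × ℤ => f p.1 * g p.2 ^ 2)
  have hcs := fun k => tsum_mul_sq_le hf hs (hrow k)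
  have hS : Summable (fun k => (∑' m, f m * g (k - m)) ^ 2) :=
    (hsum.mul_left (∑' m, f m)).of_nonneg_of_le (fun _ => sq_nonneg _) fun k => (hcs k).2
  refine ⟨fun k => (hcs k).1, hS, ?_⟩
  calc _ ≤ ∑' k, (∑' m, f m) * ∑' m, f m * g (k - m) ^ 2 :=
        hS.tsum_le_tsum (fun k => (hcs k).2) (hsum.mul_left _)
    _ = _ := by rw [tsum_mul_left, htot]; ring

theorem sobNorm_nonneg (s : ℝ) (u : ℝ → ℂ) : 0 ≤ sobNorm s u := Real.sqrt_nonneg _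

theorem sobNorm_sq (s : ℝ) (u : ℝ → ℂ) :
    sobNorm s u ^ 2 = ∑' j : ℤ, jb j ^ (2 * s) * ‖fc u j‖ ^ 2 :=
  Real.sq_sqrt (tsum_nonneg fun _ => mul_nonneg (jb_rpow_nonneg _ _) (sq_nonneg _))

theorem sobNorm_const_mul (s : ℝ) {c : ℝ} (hc : 0 ≤ c) (u : ℝ → ℂ) :
    sobNorm s (fun x => (c : ℂ) * u x) = c * sobNorm s u := by
  rw [← sq_eq_sq₀ (sobNorm_nonneg _ _) (mul_nonneg hc (sobNorm_nonneg _ _)), mul_pow, sobNorm_sq,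
    sobNorm_sq, ← tsum_mul_left]
  congr 1
  ext j
  rw [fc_const_mul, norm_mul, Complex.norm_real, Real.norm_of_nonneg hc]
  ring

theorem sobNorm_zero_sq {u : ℝ → ℂ} (hu : Continuous u) :
    sobNorm 0 u ^ 2 = (2 * π)⁻¹ * ∫ x in (0:ℝ)..(2 * π), ‖u x‖ ^ 2 := by
  rw [sobNorm_sq, ← (hasSum_sq_fc hu).tsum_eq]
  simp

theorem sobNorm_zero_mul_le {g v : ℝ → ℂ} (hg : Continuous g) (hv : Continuous v) {M : ℝ}
    (hM0 : 0 ≤ M) (hM : ∀ x, ‖g x‖ ≤ M) :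
    sobNorm 0 (fun x => g x * v x) ≤ M * sobNorm 0 v := by
  rw [← sq_le_sq₀ (sobNorm_nonneg _ _) (mul_nonneg hM0 (sobNorm_nonneg _ _)), mul_pow,
    sobNorm_zero_sq (by fun_prop), sobNorm_zero_sq hv, mul_left_comm,
    ← intervalIntegral.integral_const_mul (M ^ 2)]
  refine mul_le_mul_of_nonneg_left ?_ (inv_nonneg.2 Real.two_pi_pos.le)
  refine intervalIntegral.integral_mono_on Real.two_pi_pos.le
    ((by fun_prop : Continuous fun x => ‖g x * v x‖ ^ 2).intervalIntegrable _ _)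
    ((by fun_prop : Continuous fun x => M ^ 2 * ‖v x‖ ^ 2).intervalIntegrable _ _) fun x _ => ?_
  rw [norm_mul, mul_pow]
  gcongr
  exact hM x

theorem sobNorm_zero_le {g : ℝ → ℂ} (hg : Continuous g) {M : ℝ}
    (hM0 : 0 ≤ M) (hM : ∀ x, ‖g x‖ ≤ M) : sobNorm 0 g ≤ M := by
  have h := sobNorm_zero_mul_le hg (continuous_const (y := (1 : ℂ))) hM0 hM
  have h1 : sobNorm 0 (fun _ => (1 : ℂ)) = 1 := by
    rw [← sq_eq_sq₀ (sobNorm_nonneg _ _) zero_le_one, sobNorm_zero_sq continuous_const]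
    simp only [norm_one, one_pow, intervalIntegral.integral_const, sub_zero, smul_eq_mul, mul_one]
    exact inv_mul_cancel₀ Real.two_pi_pos.ne'
  simpa [h1] using h

namespace SmoothPer

variable {u v : ℝ → ℂ}

theorem sobNorm_mono (hu : SmoothPer u) {s t : ℝ} (h : s ≤ t) : sobNorm s u ≤ sobNorm t u := by
  refine Real.sqrt_le_sqrt ((hu.memHs s).tsum_le_tsum (fun j => ?_) (hu.memHs t))
  gcongr
  exact jb_one_le j

theorem sobNorm_deriv_le (hu : SmoothPer u) (s : ℝ) :
    sobNorm (s - 1) (_root_.deriv u) ≤ sobNorm s u := by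
  refine Real.sqrt_le_sqrt ((hu.deriv.memHs _).tsum_le_tsum (fun j => ?_) (hu.memHs s))
  rw [hu.norm_fc_deriv, mul_pow, ← mul_assoc]
  gcongr
  have : jb j ^ (2 * s) = jb j ^ (2 * (s - 1)) * jb j ^ 2 := by
    rw [← Real.rpow_natCast, ← Real.rpow_add (jb_pos j)]
    congr 1
    push_cast
    ring
  rw [this]
  exact mul_le_mul_of_nonneg_left (pow_le_pow_left₀ (abs_nonneg _) (le_max_right _ _) 2)
    (jb_rpow_nonneg _ _)

theorem sobNorm_le_add (hu : SmoothPer u) (s : ℝ) :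
    sobNorm s u ≤ sobNorm 0 u + sobNorm (s - 1) (_root_.deriv u) := by
  have hsq : sobNorm s u ^ 2 ≤ sobNorm 0 u ^ 2 + sobNorm (s - 1) (_root_.deriv u) ^ 2 := by
    rw [sobNorm_sq, sobNorm_sq, sobNorm_sq,
      ← (hu.memHs 0).tsum_add (hu.deriv.memHs (s - 1))]
    refine (hu.memHs s).tsum_le_tsum (fun j => ?_)
      (Summable.add (hu.memHs 0) (hu.deriv.memHs (s - 1)))
    rw [hu.norm_fc_deriv, mul_pow]
    rcases eq_or_ne j 0 with rfl | hj
    · simp [jb_zero]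
    · rw [← jb_of_ne_zero hj]
      have : jb j ^ (2 * s) = jb j ^ (2 * (s - 1)) * jb j ^ 2 := by
        rw [← Real.rpow_natCast, ← Real.rpow_add (jb_pos j)]
        congr 1
        push_cast
        ring
      rw [this, mul_assoc]
      exact le_add_of_nonneg_left (mul_nonneg (jb_rpow_nonneg _ _) (sq_nonneg _))
  refine (sq_le_sq₀ (sobNorm_nonneg _ _) (add_nonneg (sobNorm_nonneg _ _) (sobNorm_nonneg _ _))).1 ?_
  nlinarith [mul_nonneg (sobNorm_nonneg 0 u) (sobNorm_nonneg (s - 1) (_root_.deriv u))]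

/-- `∑ ⟨j⟩^r |û(j)| ≤ C ‖u‖_{r + 3/4}`, from Cauchy–Schwarz and `∑ ⟨j⟩^{-3/2} < ∞`. -/
theorem tsum_fc_sq_le (hu : SmoothPer u) (r : ℝ) :
    (∑' j, jb j ^ r * ‖fc u j‖) ^ 2 ≤
      (∑' j, jb j ^ (-(3 / 2) : ℝ)) * sobNorm (r + 3 / 4) u ^ 2 := by
  have e1 : ∀ j, jb j ^ (-(3 / 2) : ℝ) * (jb j ^ (r + 3 / 2) * ‖fc u j‖) ^ 2
      = jb j ^ (2 * (r + 3 / 4)) * ‖fc u j‖ ^ 2 := fun j => by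
    rw [mul_pow, ← mul_assoc, ← Real.rpow_mul_natCast (jb_pos j).le, ← Real.rpow_add (jb_pos j)]
    congr 2
    push_cast
    ring
  have e2 : ∀ j, jb j ^ (-(3 / 2) : ℝ) * (jb j ^ (r + 3 / 2) * ‖fc u j‖)
      = jb j ^ r * ‖fc u j‖ := fun j => by
    rw [← mul_assoc, ← Real.rpow_add (jb_pos j)]
    congr 2
    ring
  have := (tsum_mul_sq_le (fun j => jb_rpow_nonneg (-(3 / 2)) j)
    (summable_jb_rpow (by norm_num)) (h := fun j => jb j ^ (r + 3 / 2) * ‖fc u j‖)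
    ((hu.memHs (r + 3 / 4)).congr fun j => (e1 j).symm)).2
  simpa only [e1, e2, ← sobNorm_sq] using this

/-- Tame product estimate: the derivative loss of `3/4 < 1` on `u` is paid against the `L²` norm
of `v`. -/
theorem sobNorm_mul_le (hu : SmoothPer u) (hv : SmoothPer v) {r : ℝ} (hr : 0 ≤ r) :
    sobNorm r (fun x => u x * v x) ≤
      2 ^ r * 2 * √(∑' j, jb j ^ (-(3 / 2) : ℝ)) *
        (sobNorm (r + 3 / 4) u * sobNorm 0 v + sobNorm (3 / 4) u * sobNorm r v) := by
  set Z := ∑' j, jb j ^ (-(3 / 2) : ℝ) with hZ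
  have hZ0 : 0 ≤ Z := tsum_nonneg fun _ => jb_rpow_nonneg _ _
  set U : ℤ → ℝ := fun j => ‖fc u j‖ with hU
  set V : ℤ → ℝ := fun j => ‖fc v j‖ with hV
  have hUr : ∀ t : ℝ, Summable fun j => jb j ^ t * U j := hu.summable_fc
  have hU0 : ∀ (t : ℝ) j, 0 ≤ jb j ^ t * U j := fun t j =>
    mul_nonneg (jb_rpow_nonneg _ _) (norm_nonneg _)
  have hsqw : ∀ (t : ℝ) j, (jb j ^ t * V j) ^ 2 = jb j ^ (2 * t) * V j ^ 2 := fun t j => by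
    rw [mul_pow, ← Real.rpow_mul_natCast (jb_pos j).le]
    congr 2
    push_cast
    ring
  have hVr : ∀ t : ℝ, Summable fun j => (jb j ^ t * V j) ^ 2 := fun t =>
    (hv.memHs t).congr fun j => (hsqw t j).symm
  have hVs : ∀ t : ℝ, ∑' j, (jb j ^ t * V j) ^ 2 = sobNorm t v ^ 2 := fun t => by
    rw [sobNorm_sq]
    exact tsum_congr fun j => hsqw t j
  obtain ⟨a1, a2, a3⟩ := young_sq (hU0 r) (hUr r) (hVr 0)
  obtain ⟨b1, b2, b3⟩ := young_sq (hU0 0) (hUr 0) (hVr r)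
  rw [hVs] at a3 b3
  set P : ℤ → ℝ := fun k => ∑' m, jb m ^ r * U m * (jb (k - m) ^ (0:ℝ) * V (k - m)) with hP
  set Q : ℤ → ℝ := fun k => ∑' m, jb m ^ (0:ℝ) * U m * (jb (k - m) ^ r * V (k - m)) with hQ
  have hUV : ∀ k, Summable fun m => U m * V (k - m) := fun k => by
    have := (young_sq (hU0 0) (hUr 0) (hVr 0)).1 k
    simpa using this
  have hpt : ∀ k, jb k ^ r * ‖fc (fun x => u x * v x) k‖ ≤ 2 ^ r * (P k + Q k) := fun k => by
    have h1 : ‖fc (fun x => u x * v x) k‖ ≤ ∑' m, U m * V (k - m) := by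
      rw [← (hu.hasSum_fc_mul hv k).tsum_eq]
      refine (norm_tsum_le_tsum_norm ?_).trans (le_of_eq ?_)
      · simpa only [norm_mul] using hUV k
      · simp only [norm_mul, hU, hV]
    calc jb k ^ r * ‖fc (fun x => u x * v x) k‖ ≤ jb k ^ r * ∑' m, U m * V (k - m) :=
          mul_le_mul_of_nonneg_left h1 (jb_rpow_nonneg _ _)
      _ = ∑' m, jb k ^ r * (U m * V (k - m)) := tsum_mul_left.symm
      _ ≤ ∑' m, 2 ^ r * (jb m ^ r * U m * (jb (k - m) ^ (0:ℝ) * V (k - m)) +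
            jb m ^ (0:ℝ) * U m * (jb (k - m) ^ r * V (k - m))) := by
          refine ((hUV k).mul_left _).tsum_le_tsum (fun m => ?_) (((a1 k).add (b1 k)).mul_left _)
          have h2 := jb_add_rpow_le hr m (k - m)
          rw [add_sub_cancel] at h2
          calc _ ≤ 2 ^ r * (jb m ^ r + jb (k - m) ^ r) * (U m * V (k - m)) :=
                mul_le_mul_of_nonneg_right h2 (mul_nonneg (norm_nonneg _) (norm_nonneg _))
            _ = _ := by
                simp only [Real.rpow_zero]
                ring
      _ = _ := by rw [tsum_mul_left, (a1 k).tsum_add (b1 k)]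
  have hsq : sobNorm r (fun x => u x * v x) ^ 2 ≤ (2 ^ r) ^ 2 * (2 * ∑' k, P k ^ 2 +
      2 * ∑' k, Q k ^ 2) := by
    rw [sobNorm_sq, ← tsum_mul_left, ← tsum_mul_left,
      ← (a2.mul_left 2).tsum_add (b2.mul_left 2), ← tsum_mul_left]
    refine ((hu.mul hv).memHs r).tsum_le_tsum (fun k => ?_)
      (((a2.mul_left 2).add (b2.mul_left 2)).mul_left _)
    have h3 : jb k ^ (2 * r) * ‖fc (fun x => u x * v x) k‖ ^ 2 =
        (jb k ^ r * ‖fc (fun x => u x * v x) k‖) ^ 2 := by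
      rw [mul_pow, ← Real.rpow_mul_natCast (jb_pos k).le]
      congr 2
      push_cast
      ring
    rw [h3]
    have h4 := pow_le_pow_left₀ (mul_nonneg (jb_rpow_nonneg r k)
      (norm_nonneg (fc (fun x => u x * v x) k))) (hpt k) 2
    refine h4.trans ?_
    rw [mul_pow]
    refine mul_le_mul_of_nonneg_left ?_ (sq_nonneg _)
    nlinarith [sq_nonneg (P k - Q k)]
  have hA := hu.tsum_fc_sq_le r
  have hB := hu.tsum_fc_sq_le 0
  rw [zero_add] at hB
  have hPb : ∑' k, P k ^ 2 ≤ Z * sobNorm (r + 3 / 4) u ^ 2 * sobNorm 0 v ^ 2 :=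
    a3.trans (mul_le_mul_of_nonneg_right hA (sq_nonneg _))
  have hQb : ∑' k, Q k ^ 2 ≤ Z * sobNorm (3 / 4) u ^ 2 * sobNorm r v ^ 2 :=
    b3.trans (mul_le_mul_of_nonneg_right hB (sq_nonneg _))
  have n1 := mul_nonneg (sobNorm_nonneg (r + 3 / 4) u) (sobNorm_nonneg 0 v)
  have n2 := mul_nonneg (sobNorm_nonneg (3 / 4) u) (sobNorm_nonneg r v)
  refine (sq_le_sq₀ (sobNorm_nonneg _ _) (mul_nonneg (by positivity) (add_nonneg n1 n2))).1 ?_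
  refine hsq.trans ?_
  rw [mul_pow, mul_pow, mul_pow, Real.sq_sqrt hZ0, mul_assoc, mul_assoc]
  refine mul_le_mul_of_nonneg_left ?_ (sq_nonneg _)
  set X := sobNorm (r + 3 / 4) u * sobNorm 0 v
  set Y := sobNorm (3 / 4) u * sobNorm r v
  have e1 : Z * sobNorm (r + 3 / 4) u ^ 2 * sobNorm 0 v ^ 2 = Z * X ^ 2 := by ring
  have e2 : Z * sobNorm (3 / 4) u ^ 2 * sobNorm r v ^ 2 = Z * Y ^ 2 := by ring
  rw [e1] at hPb
  rw [e2] at hQb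
  have n3 := mul_nonneg hZ0 (mul_nonneg n1 n2)
  have n4 := mul_nonneg hZ0 (sq_nonneg X)
  have n5 := mul_nonneg hZ0 (sq_nonneg Y)
  linarith

end SmoothPer

/-! ### Composition estimate -/

section Composition

variable {F : ℝ → ℂ} {a : ℝ → ℝ}

theorem smoothPer_ofReal (ha : ContDiff ℝ (⊤ : ℕ∞) a) (hp : Function.Periodic a (2 * π)) :
    SmoothPer (fun x => (a x : ℂ)) :=
  ⟨Complex.ofRealCLM.contDiff.comp ha, fun x => by simp only [hp x]⟩

theorem smoothPer_comp (hF : ContDiff ℝ (⊤ : ℕ∞) F) (ha : ContDiff ℝ (⊤ : ℕ∞) a)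
    (hp : Function.Periodic a (2 * π)) : SmoothPer (fun x => F (a x)) :=
  ⟨hF.comp ha, fun x => by simp only [hp x]⟩

theorem deriv_comp_eq (hF : ContDiff ℝ (⊤ : ℕ∞) F) (ha : ContDiff ℝ (⊤ : ℕ∞) a) :
    deriv (fun x => F (a x)) = fun x => deriv F (a x) * deriv (fun x => (a x : ℂ)) x := by
  ext x
  have h1 : HasDerivAt F (deriv F (a x)) (a x) := (hF.differentiable (by simp) _).hasDerivAt
  have h2 : HasDerivAt a (deriv a x) x := (ha.differentiable (by simp) _).hasDerivAt
  have h3 : HasDerivAt (fun x => F (a x)) (deriv a x • deriv F (a x)) x := h1.scomp x h2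
  rw [h2.ofReal_comp.deriv, h3.deriv, Complex.real_smul, mul_comm]

/-- Moser-type composition estimate, uniform over all `F` whose derivatives on `[-R, R]` are
bounded by a given sequence `K`. Each increase of `n` raises the admissible Sobolev exponent
by `1/4`, the gain left over from the loss of `3/4` in `SmoothPer.sobNorm_mul_le`. -/
theorem moser (R : ℝ) (n : ℕ) : ∀ K : ℕ → ℝ, ∃ D : ℝ, 0 ≤ D ∧
    ∀ F : ℝ → ℂ, ContDiff ℝ (⊤ : ℕ∞) F →
      (∀ m y, |y| ≤ R → ‖iteratedDeriv m F y‖ ≤ K m) →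
      ∀ a : ℝ → ℝ, ContDiff ℝ (⊤ : ℕ∞) a → Function.Periodic a (2 * π) →
        (∀ x, |a x| ≤ R) → sobNormR 1 a ≤ 1 →
        ∀ s : ℝ, s ≤ 1 + n / 4 →
          sobNorm s (fun x => F (a x)) ≤ D * (1 + sobNormR s a) := by
  induction n with
  | zero =>
    intro K
    refine ⟨|K 0| + |K 1|, by positivity, fun F hF hK a ha hp hR h1 s hs => ?_⟩
    have hs1 : s ≤ 1 := by simpa using hs
    have hA := smoothPer_ofReal ha hp
    have hu := smoothPer_comp hF ha hp
    have hF' : ContDiff ℝ (⊤ : ℕ∞) (deriv F) := (contDiff_infty_iff_deriv.1 hF).2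
    have hb0 : sobNorm 0 (fun x => F (a x)) ≤ |K 0| :=
      sobNorm_zero_le hu.continuous (abs_nonneg _) fun x =>
        (by simpa using hK 0 (a x) (hR x) : _ ≤ K 0).trans (le_abs_self _)
    have hb1 : sobNorm 0 (deriv fun x => F (a x)) ≤ |K 1| := by
      rw [deriv_comp_eq hF ha]
      have h2 := sobNorm_zero_mul_le (hF'.continuous.comp ha.continuous) hA.deriv.continuous
        (abs_nonneg (K 1)) (fun x =>
          (by simpa using hK 1 (a x) (hR x) : ‖deriv F (a x)‖ ≤ K 1).trans (le_abs_self _))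
      have h3 := hA.sobNorm_deriv_le 1
      rw [sub_self] at h3
      exact h2.trans (mul_le_of_le_one_right (abs_nonneg _) (h3.trans h1))
    have h4 := hu.sobNorm_le_add 1
    rw [sub_self] at h4
    have h5 : 0 ≤ sobNormR s a := sobNorm_nonneg _ _
    calc _ ≤ sobNorm 1 (fun x => F (a x)) := hu.sobNorm_mono hs1
      _ ≤ |K 0| + |K 1| := h4.trans (add_le_add hb0 hb1)
      _ ≤ _ := le_mul_of_one_le_right (by positivity) (by linarith)
  | succ n ih =>
    intro K
    obtain ⟨D, hD0, hD⟩ := ih K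
    obtain ⟨D', hD0', hD'⟩ := ih fun m => K (m + 1)
    set S : ℝ := 1 + (n + 1 : ℕ) / 4 with hS
    set Z : ℝ := √(∑' j, jb j ^ (-(3 / 2) : ℝ)) with hZ
    have hZ0 : 0 ≤ Z := Real.sqrt_nonneg _
    set E : ℝ := 2 ^ S * 2 * Z with hE
    have hE0 : 0 ≤ E := by positivity
    refine ⟨D + (|K 0| + 3 * E * D'), by positivity, fun F hF hK a ha hp hR h1 s hs => ?_⟩
    have hA := smoothPer_ofReal ha hp
    have hN0 : 0 ≤ sobNormR s a := sobNorm_nonneg _ _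
    rcases le_or_gt s (1 + n / 4) with hsn | hsn
    · refine (hD F hF hK a ha hp hR h1 s hsn).trans ?_
      gcongr
      exact le_add_of_nonneg_right (by positivity)
    · have hs1 : 1 ≤ s := by
        have : (0 : ℝ) ≤ n / 4 := by positivity
        linarith
      have hu := smoothPer_comp hF ha hp
      have hF' : ContDiff ℝ (⊤ : ℕ∞) (deriv F) := (contDiff_infty_iff_deriv.1 hF).2
      have hu' := smoothPer_comp hF' ha hp
      have hK' : ∀ m y, |y| ≤ R → ‖iteratedDeriv m (deriv F) y‖ ≤ K (m + 1) := fun m y hy => by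
        rw [← iteratedDeriv_succ']
        exact hK (m + 1) y hy
      have hI := hD' (deriv F) hF' hK' a ha hp hR h1
      have hb0 : sobNorm 0 (fun x => F (a x)) ≤ |K 0| :=
        sobNorm_zero_le hu.continuous (abs_nonneg _) fun x =>
          (by simpa using hK 0 (a x) (hR x) : _ ≤ K 0).trans (le_abs_self _)
      have hmul := hu'.sobNorm_mul_le hA.deriv (r := s - 1) (by linarith)
      rw [← deriv_comp_eq hF ha] at hmul
      have i1 : sobNorm (s - 1 + 3 / 4) (fun x => deriv F (a x)) ≤ D' * (1 + sobNormR s a) := by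
        refine (hI _ ?_).trans ?_
        · rw [hS] at hs
          push_cast at hs
          linarith
        · gcongr
          exact hA.sobNorm_mono (by linarith)
      have i2 : sobNorm (3 / 4) (fun x => deriv F (a x)) ≤ D' * 2 := by
        refine (hI _ ?_).trans ?_
        · have : (0 : ℝ) ≤ n / 4 := by positivity
          linarith
        · gcongr
          have : sobNormR (3 / 4) a ≤ sobNormR 1 a := hA.sobNorm_mono (by norm_num)
          linarith
      have i3 : sobNorm 0 (deriv fun x => (a x : ℂ)) ≤ 1 := by
        have h3 := hA.sobNorm_deriv_le 1
        rw [sub_self] at h3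
        exact h3.trans h1
      have i4 : sobNorm (s - 1) (deriv fun x => (a x : ℂ)) ≤ sobNormR s a :=
        hA.sobNorm_deriv_le s
      have i5 : (2 : ℝ) ^ (s - 1) * 2 * Z ≤ E := by
        rw [hE]
        gcongr
        · norm_num
        · linarith
      have hb1 : sobNorm (s - 1) (deriv fun x => F (a x)) ≤
          E * (D' * (1 + sobNormR s a) * 1 + D' * 2 * sobNormR s a) := by
        refine hmul.trans ?_
        have := sobNorm_nonneg (s - 1) (deriv fun x => (a x : ℂ))
        have := sobNorm_nonneg 0 (deriv fun x => (a x : ℂ))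
        have := sobNorm_nonneg (3 / 4) (fun x => deriv F (a x))
        have := sobNorm_nonneg (s - 1 + 3 / 4) (fun x => deriv F (a x))
        gcongr
      refine (hu.sobNorm_le_add s).trans ((add_le_add hb0 hb1).trans ?_)
      have j1 := mul_nonneg hE0 hD0'
      have j2 := mul_nonneg (abs_nonneg (K 0)) hN0
      have j3 := mul_nonneg hD0 hN0
      have j4 := mul_nonneg j1 hN0
      nlinarith

/-- Powers of comparable quantities are comparable; adding the two constants covers both signs
of `p`. -/
theorem max_rpow_le {c C w B : ℝ} (hc : 0 < c) (hB : 0 < B) (h1 : c * B ≤ w) (h2 : w ≤ C * B)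
    (p : ℝ) : w ^ p ≤ (c ^ p + C ^ p) * B ^ p := by
  have hw : 0 < w := lt_of_lt_of_le (mul_pos hc hB) h1
  have hC : 0 < C := pos_of_mul_pos_left (lt_of_lt_of_le hw h2) hB.le
  have k1 : 0 ≤ c ^ p * B ^ p := by positivity
  have k2 : 0 ≤ C ^ p * B ^ p := by positivity
  rcases le_total 0 p with hp | hp
  · have := Real.rpow_le_rpow hw.le h2 hp
    rw [Real.mul_rpow hC.le hB.le] at this
    linarith
  · have := Real.rpow_le_rpow_of_nonpos (mul_pos hc hB) h1 hp
    rw [Real.mul_rpow hc.le hB.le] at this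
    linarith

/-- Since `A_* + y` stays in `[A_*/2, 3A_*/2]`, the rescaled functions
`y ↦ ⟨j⟩^{-σ} ℓ(j(A_* + y))` have all derivatives on `[-A_*/2, A_*/2]` bounded uniformly
in `j`. -/
theorem rescaled_bound {σ Astar : ℝ} (hAstar : 0 < Astar) {ℓ : ℝ → ℂ}
    (hℓ : ContDiff ℝ (⊤ : ℕ∞) ℓ) {m : ℕ} {Cm : ℝ}
    (hCm : ∀ y : ℝ, ‖iteratedDeriv m ℓ y‖ ≤ Cm * (max 1 |y|) ^ (σ - (m : ℝ)))
    (j : ℤ) {y : ℝ} (hy : |y| ≤ Astar / 2) :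
    ‖iteratedDeriv m (fun y => ((jb j ^ (-σ) : ℝ) : ℂ) * ℓ ((j : ℝ) * (Astar + y))) y‖ ≤
      |Cm| * ((min 1 (Astar / 2)) ^ (σ - m) + (max 1 (3 * Astar / 2)) ^ (σ - m)) := by
  have hB := jb_pos j
  have e : iteratedDeriv m (fun y => ((jb j ^ (-σ) : ℝ) : ℂ) * ℓ ((j : ℝ) * (Astar + y))) y =
      ((jb j ^ (-σ) : ℝ) : ℂ) * ((j : ℝ) ^ m • iteratedDeriv m ℓ ((j : ℝ) * (Astar + y))) := by
    rw [iteratedDeriv_const_mul_field]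
    congr 1
    have h1 := congrFun (iteratedDeriv_comp_const_add m (fun y => ℓ ((j : ℝ) * y)) Astar) y
    rw [h1]
    have h2 := congrFun (iteratedDeriv_comp_const_smul
      (hℓ.of_le (by exact_mod_cast le_top) : ContDiff ℝ m ℓ) (j : ℝ)) (Astar + y)
    exact h2
  have hy' := abs_le.1 hy
  have hw : max 1 |(j : ℝ) * (Astar + y)| ^ (σ - m) ≤ ((min 1 (Astar / 2)) ^ (σ - m) +
      (max 1 (3 * Astar / 2)) ^ (σ - m)) * jb j ^ (σ - m) := by
    apply max_rpow_le (lt_min one_pos (by linarith)) hB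
    · rw [abs_mul, abs_of_pos (by linarith : 0 < Astar + y)]
      rcases max_cases 1 |(j : ℝ)| with ⟨h, _⟩ | ⟨h, _⟩ <;> rw [jb, h]
      · exact (mul_le_of_le_one_left zero_le_one (min_le_left _ _)).trans (le_max_left _ _)
      · refine le_trans ?_ (le_max_right _ _)
        rw [mul_comm]
        gcongr
        exact (min_le_right _ _).trans (by linarith)
    · rw [abs_mul, abs_of_pos (by linarith : 0 < Astar + y)]
      apply max_le
      · exact one_le_mul_of_one_le_of_one_le (le_max_left _ _) (jb_one_le j)
      · rw [mul_comm]
        gcongr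
        · exact le_trans (by linarith) (le_max_right _ _)
        · exact le_max_right _ _
  have hjm : |(j : ℝ)| ^ m ≤ jb j ^ m := pow_le_pow_left₀ (abs_nonneg _) (le_max_right _ _) m
  set G := (min 1 (Astar / 2)) ^ (σ - m) + (max 1 (3 * Astar / 2)) ^ (σ - m) with hG
  have hG0 : 0 ≤ G := by
    have : 0 ≤ min 1 (Astar / 2) := le_min zero_le_one (by linarith)
    positivity
  rw [e, norm_mul, norm_smul, norm_pow, Complex.norm_real, Real.norm_of_nonneg (jb_rpow_nonneg _ _),
    Real.norm_eq_abs]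
  have hone : jb j ^ (-σ) * (jb j ^ m * jb j ^ (σ - m)) = 1 := by
    rw [← Real.rpow_natCast, ← Real.rpow_add hB, ← Real.rpow_add hB]
    rw [show -σ + ((m : ℝ) + (σ - m)) = 0 by ring, Real.rpow_zero]
  calc _ ≤ jb j ^ (-σ) * (jb j ^ m * (|Cm| * (G * jb j ^ (σ - m)))) := by
        have hpos : 0 ≤ max 1 |(j : ℝ) * (Astar + y)| ^ (σ - m) := by positivity
        have h3 : ‖iteratedDeriv m ℓ ((j : ℝ) * (Astar + y))‖ ≤ |Cm| * (G * jb j ^ (σ - m)) :=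
          (hCm _).trans ((mul_le_mul_of_nonneg_right (le_abs_self Cm) hpos).trans
            (mul_le_mul_of_nonneg_left hw (abs_nonneg _)))
        exact mul_le_mul_of_nonneg_left (mul_le_mul hjm h3 (norm_nonneg _) (by positivity))
          (jb_rpow_nonneg _ _)
    _ = |Cm| * G * (jb j ^ (-σ) * (jb j ^ m * jb j ^ (σ - m))) := by ring
    _ = |Cm| * G := by rw [hone, mul_one]

end Composition

/-- symbol estimates for h(x,j) := ℓ(jA(x)). -/
theorem statement8 (σ : ℝ) (Astar : ℝ) (hAstar : 0 < Astar)
    (ℓ : ℝ → ℂ) (hℓ : ContDiff ℝ (⊤ : ℕ∞) ℓ)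
    (hℓb : ∀ m : ℕ, ∃ Cm : ℝ, ∀ y : ℝ,
      ‖iteratedDeriv m ℓ y‖ ≤ Cm * (max 1 |y|) ^ (σ - (m : ℝ))) :
    ∃ C : ℝ → ℝ, (∀ s, 0 < C s) ∧ Monotone C ∧
      ∀ s : ℝ, 0 ≤ s → ∀ a : ℝ → ℝ, ContDiff ℝ (⊤ : ℕ∞) a →
        Function.Periodic a (2 * π) →
        (∀ x, |a x| ≤ Astar / 2) → sobNormR 1 a ≤ 1 →
        ∀ j : ℤ, jb j ^ (-σ) * sobNorm s (fun x => ℓ ((j : ℝ) * (Astar + a x)))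
          ≤ C s * (1 + sobNormR s a) := by
  choose Cm hCm using hℓb
  set K : ℕ → ℝ := fun m =>
    |Cm m| * ((min 1 (Astar / 2)) ^ (σ - m) + (max 1 (3 * Astar / 2)) ^ (σ - m)) with hK
  choose D hD0 hD using fun n => moser (Astar / 2) n K
  -- partial sums turn the constants `D n` into a positive monotone function of `s`
  refine ⟨fun s => 1 + ∑ i ∈ Finset.range (⌈4 * s⌉₊ + 1), D i, fun s => ?_, fun s t hst => ?_,
    fun s _ a ha hp hR h1 j => ?_⟩
  · have := Finset.sum_nonneg fun i (_ : i ∈ Finset.range (⌈4 * s⌉₊ + 1)) => hD0 i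
    linarith
  · refine add_le_add le_rfl (Finset.sum_le_sum_of_subset_of_nonneg ?_ fun i _ _ => hD0 i)
    exact Finset.range_subset_range.2 (Nat.succ_le_succ (Nat.ceil_mono (by linarith)))
  · have hF : ContDiff ℝ (⊤ : ℕ∞)
        (fun y : ℝ => ((jb j ^ (-σ) : ℝ) : ℂ) * ℓ ((j : ℝ) * (Astar + y))) :=
      contDiff_const.mul (hℓ.comp (contDiff_const.mul (contDiff_const.add contDiff_id)))
    have hs : s ≤ 1 + (⌈4 * s⌉₊ : ℝ) / 4 := by linarith [Nat.le_ceil (4 * s)]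
    have h := hD ⌈4 * s⌉₊ _ hF (fun m y hy => rescaled_bound hAstar hℓ (hCm m) j hy)
      a ha hp hR h1 s hs
    rw [sobNorm_const_mul s (jb_rpow_nonneg _ _)] at h
    have h0 : 0 ≤ sobNormR s a := sobNorm_nonneg _ _
    have h2 : D ⌈4 * s⌉₊ ≤ ∑ i ∈ Finset.range (⌈4 * s⌉₊ + 1), D i :=
      Finset.single_le_sum (fun i _ => hD0 i) (Finset.self_mem_range_succ _)
    exact h.trans (mul_le_mul_of_nonneg_right (by linarith) (by linarith))
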